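/- Let (u, w, b, Π) be a smooth solution of the stationary magneto-micropolar equations on ℝ³ satisfying the potential growth hypothesis: there exist smooth Φ, Ψ, Υ : ℝ³ → ℝ^{3×3} with div Φ = u, div Ψ = b, div Υ = w, an exponent s ∈ (3, 6], and a constant C₀ > 0 such that the sum of the s-mean oscillations (|B_r|^{-1} ∫_{B_r} |Φ − Φ_{B_r}|^s dx)^{1/s} + (|B_r|^{-1} ∫_{B_r} |Ψ − Ψ_{B_r}|^s dx)^{1/s} + (|B_r|^{-1} ∫_{B_r} |Υ − Υ_{B_r}|^s dx)^{1/s} ≤ C₀ r^{1/3 − 1/s} for all r > 1. Then there is a constant C > 0 (depending on the solution, C₀ and s) such that for all r > 1: r^{−1} ∫_{B_{2r}∖B_r} (|u|³ + |b|³ + |w|³) dx ≤ C [ ‖∇u‖_{L²(B_{4r}∖B_{r/2})}^{18/(s+6)} + ‖∇b‖_{L²(B_{4r}∖B_{r/2})}^{18/(s+6)} + ‖∇w‖_{L²(B_{4r}∖B_{r/2})}^{18/(s+6)} + r^{−3/s} ]. -/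

import Mathlib

open MeasureTheory Real Filter Metric
open scoped Topology ENNReal

noncomputable section

/-- Three-dimensional Euclidean space. -/
abbrev E3 := EuclideanSpace ℝ (Fin 3)

/-- Partial derivative in the `i`-th coordinate direction. -/
def pd (i : Fin 3) (f : E3 → ℝ) (x : E3) : ℝ := fderiv ℝ f x (EuclideanSpace.single i 1)

/-- Laplacian of a scalar function. -/
def lap (f : E3 → ℝ) (x : E3) : ℝ := ∑ i, pd i (fun y => pd i f y) x

/-- Divergence of a vector field. -/
def vdiv (v : E3 → E3) (x : E3) : ℝ := ∑ i, pd i (fun y => v y i) x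

/-- Curl of a vector field on ℝ³. -/
def curl3 (v : E3 → E3) (x : E3) : Fin 3 → ℝ :=
  ![pd 1 (fun y => v y 2) x - pd 2 (fun y => v y 1) x,
    pd 2 (fun y => v y 0) x - pd 0 (fun y => v y 2) x,
    pd 0 (fun y => v y 1) x - pd 1 (fun y => v y 0) x]

/-- Squared norm of the full gradient of a vector field: |∇v|² = Σᵢⱼ (∂ᵢ vⱼ)². -/
def gradSq (v : E3 → E3) (x : E3) : ℝ := ∑ j, ∑ i, (pd i (fun y => v y j) x) ^ 2

/-- The open ball of radius `r` centered at the origin. -/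
def ball3 (r : ℝ) : Set E3 := Metric.ball (0 : E3) r

/-- `(u, w, b, Π)` is a smooth solution of the stationary magneto-micropolar equations on ℝ³
(with all physical constants set to 1):
−Δu + (u·∇)u + ∇Π = ∇×w + (b·∇)b; −Δw + (u·∇)w = ∇(div w) + ∇×u − 2w;
−Δb + (u·∇)b = (b·∇)u; div u = 0, div b = 0. -/
structure IsMMPSolution (u w b : E3 → E3) (P : E3 → ℝ) : Prop where
  smooth_u : ContDiff ℝ (⊤ : ℕ∞) u
  smooth_w : ContDiff ℝ (⊤ : ℕ∞) w
  smooth_b : ContDiff ℝ (⊤ : ℕ∞) b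
  smooth_P : ContDiff ℝ (⊤ : ℕ∞) P
  eq_u : ∀ x : E3, ∀ j : Fin 3,
    -(lap (fun y => u y j) x) + (∑ i, u x i * pd i (fun y => u y j) x) + pd j P x
      = curl3 w x j + ∑ i, b x i * pd i (fun y => b y j) x
  eq_w : ∀ x : E3, ∀ j : Fin 3,
    -(lap (fun y => w y j) x) + (∑ i, u x i * pd i (fun y => w y j) x)
      = pd j (fun y => vdiv w y) x + curl3 u x j - 2 * w x j
  eq_b : ∀ x : E3, ∀ j : Fin 3,
    -(lap (fun y => b y j) x) + (∑ i, u x i * pd i (fun y => b y j) x)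
      = ∑ i, b x i * pd i (fun y => u y j) x
  div_u : ∀ x : E3, vdiv u x = 0
  div_b : ∀ x : E3, vdiv b x = 0

/-- Divergence of a matrix-valued function: (div Φ)ⱼ = Σᵢ ∂ᵢ Φᵢⱼ. -/
def mdiv (Φ : E3 → Fin 3 → Fin 3 → ℝ) (x : E3) (j : Fin 3) : ℝ :=
  ∑ i, pd i (fun y => Φ y i j) x

/-- Mean value of a matrix-valued function over the ball of radius `r`. -/
def mavg (Φ : E3 → Fin 3 → Fin 3 → ℝ) (r : ℝ) (i j : Fin 3) : ℝ :=
  (volume (ball3 r)).toReal⁻¹ * ∫ x in ball3 r, Φ x i j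

/-- Frobenius norm of a 3×3 matrix. -/
def frob (A : Fin 3 → Fin 3 → ℝ) : ℝ := Real.sqrt (∑ i, ∑ j, (A i j) ^ 2)

/-- The `s`-mean oscillation of `Φ` over the ball of radius `r`:
`(|B_r|⁻¹ ∫_{B_r} |Φ − Φ_{B_r}|^s dx)^(1/s)`. -/
def meanOsc (Φ : E3 → Fin 3 → Fin 3 → ℝ) (s r : ℝ) : ℝ :=
  ((volume (ball3 r)).toReal⁻¹ *
      ∫ x in ball3 r, (frob fun i j => Φ x i j - mavg Φ r i j) ^ s) ^ (1 / s)

theorem continuous_pd {f : E3 → ℝ} (hf : ContDiff ℝ 1 f) (i : Fin 3) : Continuous (pd i f) :=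
  (hf.continuous_fderiv one_ne_zero).clm_apply continuous_const

theorem pd_mul {f g : E3 → ℝ} {x : E3} (hf : DifferentiableAt ℝ f x)
    (hg : DifferentiableAt ℝ g x) (i : Fin 3) :
    pd i (fun y => f y * g y) x = f x * pd i g x + g x * pd i f x := by
  simp [pd, fderiv_fun_mul hf hg]

theorem pd_comp {f : E3 → ℝ} {φ : ℝ → ℝ} {φ' : ℝ} {x : E3} (hφ : HasDerivAt φ φ' (f x))
    (hf : DifferentiableAt ℝ f x) (i : Fin 3) :
    pd i (fun y => φ (f y)) x = φ' * pd i f x := by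
  have h := (hφ.comp_hasFDerivAt x hf.hasFDerivAt).fderiv
  unfold pd
  rw [show (fun y => φ (f y)) = φ ∘ f from rfl, h]
  simp

theorem pd_pow {f : E3 → ℝ} {x : E3} (hf : DifferentiableAt ℝ f x) (n : ℕ) (i : Fin 3) :
    pd i (fun y => f y ^ n) x = n * f x ^ (n - 1) * pd i f x :=
  pd_comp (hasDerivAt_pow n (f x)) hf i

theorem hasDerivAt_mul_abs (t : ℝ) : HasDerivAt (fun t : ℝ => t * |t|) (2 * |t|) t := by
  rcases eq_or_ne t 0 with rfl | ht
  · rw [hasDerivAt_iff_tendsto_slope_zero]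
    simp only [zero_add, abs_zero, mul_zero, sub_zero, smul_eq_mul]
    have h : Tendsto (fun t : ℝ => |t|) (𝓝[≠] 0) (𝓝 0) := by
      have := (continuous_abs (G := ℝ)).tendsto 0
      rw [abs_zero] at this
      exact this.mono_left nhdsWithin_le_nhds
    refine h.congr' ?_
    filter_upwards [self_mem_nhdsWithin] with a ha
    have : a ≠ 0 := ha
    field_simp
  · refine ((hasDerivAt_id t).mul (hasDerivAt_abs ht)).congr_deriv ?_
    rcases lt_or_gt_of_ne ht with h | h
    · simp [abs_of_neg h, sign_neg h]; ring
    · simp [abs_of_pos h, sign_pos h]; ring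

theorem norm_fderiv_sq_le (f : E3 → ℝ) (x : E3) :
    ‖fderiv ℝ f x‖ ^ 2 ≤ ∑ i, (pd i f x) ^ 2 := by
  have h0 : 0 ≤ ∑ i, (pd i f x) ^ 2 := Finset.sum_nonneg fun i _ => sq_nonneg _
  have h : ‖fderiv ℝ f x‖ ≤ √(∑ i, (pd i f x) ^ 2) := by
    refine ContinuousLinearMap.opNorm_le_bound _ (Real.sqrt_nonneg _) fun y => ?_
    have hy : y = ∑ i, y i • EuclideanSpace.single i (1 : ℝ) := by
      ext j
      fin_cases j <;> simp [Fin.sum_univ_three]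
    have hL : fderiv ℝ f x y = ∑ i, pd i f x * y i := by
      conv_lhs => rw [hy]
      simp only [map_sum, map_smul, smul_eq_mul, pd, mul_comm]
    rw [hL, EuclideanSpace.norm_eq, ← Real.sqrt_mul h0]
    refine Real.abs_le_sqrt ?_
    simpa using Finset.sum_mul_sq_le_sq_mul_sq Finset.univ (fun i => pd i f x) (fun i => y i)
  calc ‖fderiv ℝ f x‖ ^ 2 ≤ √(∑ i, (pd i f x) ^ 2) ^ 2 := by gcongr
    _ = _ := Real.sq_sqrt h0

theorem exists_sobolev_const : ∃ S : ℝ, 0 < S ∧ ∀ h : E3 → ℝ, ContDiff ℝ 1 h →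
    HasCompactSupport h → ∫ x, h x ^ 6 ≤ S * (∫ x, ∑ i, (pd i h x) ^ 2) ^ 3 := by
  set K := eLpNormLESNormFDerivOfEqInnerConst (volume : Measure E3) (2 : NNReal) with hK
  refine ⟨(K : ℝ) ^ 6 + 1, by positivity, fun h hh hs => ?_⟩
  have key := eLpNorm_le_eLpNorm_fderiv_of_eq_inner (μ := (volume : Measure E3)) hh hs
    (p := 2) (p' := 6) (by norm_num) (by simp) (by simp; norm_num)
  have hcd : Continuous (fderiv ℝ h) := hh.continuous_fderiv one_ne_zero
  have hsd : HasCompactSupport (fderiv ℝ h) := hs.fderiv ℝ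
  have m6 : MemLp h (6 : NNReal) volume := hh.continuous.memLp_of_hasCompactSupport hs
  have m2 : MemLp (fderiv ℝ h) (2 : NNReal) volume := hcd.memLp_of_hasCompactSupport hsd
  rw [m6.eLpNorm_eq_integral_rpow_norm (by simp) (by simp),
    m2.eLpNorm_eq_integral_rpow_norm (by simp) (by simp), ← hK,
    ← ENNReal.ofReal_coe_nnreal (p := K), ← ENNReal.ofReal_mul (by positivity),
    ENNReal.ofReal_le_ofReal_iff (by positivity)] at key
  simp only [ENNReal.coe_toReal] at key
  have e6 : ∀ x, ‖h x‖ ^ ((6 : NNReal) : ℝ) = h x ^ 6 := fun x => by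
    rw [show ((6 : NNReal) : ℝ) = ((6 : ℕ) : ℝ) by norm_num, Real.rpow_natCast,
      Real.norm_eq_abs, Even.pow_abs (by decide)]
  have e2 : ∀ x, ‖fderiv ℝ h x‖ ^ ((2 : NNReal) : ℝ) = ‖fderiv ℝ h x‖ ^ 2 := fun x => by
    rw [show ((2 : NNReal) : ℝ) = ((2 : ℕ) : ℝ) by norm_num, Real.rpow_natCast]
  simp only [e6, e2] at key
  have i6 : 0 ≤ ∫ x, h x ^ 6 := integral_nonneg fun x => by positivity
  have i2 : 0 ≤ ∫ x, ‖fderiv ℝ h x‖ ^ 2 := integral_nonneg fun x => by positivity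
  have key2 := pow_le_pow_left₀ (by positivity) key 6
  rw [mul_pow, ← Real.rpow_natCast, ← Real.rpow_mul i6, ← Real.rpow_natCast (_ ^ _),
    ← Real.rpow_mul i2] at key2
  have a1 : ((6 : NNReal) : ℝ)⁻¹ * ((6 : ℕ) : ℝ) = 1 := by norm_num
  have a2 : ((2 : NNReal) : ℝ)⁻¹ * ((6 : ℕ) : ℝ) = ((3 : ℕ) : ℝ) := by norm_num
  rw [a1, a2, Real.rpow_one, Real.rpow_natCast] at key2
  have hle : ∫ x, ‖fderiv ℝ h x‖ ^ 2 ≤ ∫ x, ∑ i, (pd i h x) ^ 2 := by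
    refine integral_mono ?_ ?_ fun x => norm_fderiv_sq_le h x
    · refine Continuous.integrable_of_hasCompactSupport (by fun_prop) (hsd.mono fun x hx hn => hx ?_)
      simp [hn]
    · refine integrable_finsetSum _ fun i _ => Continuous.integrable_of_hasCompactSupport
        ((continuous_pd hh i).pow 2) (hsd.mono fun x hx hn => hx ?_)
      simp [pd, hn]
  calc ∫ x, h x ^ 6 ≤ (K : ℝ) ^ 6 * (∫ x, ‖fderiv ℝ h x‖ ^ 2) ^ 3 := key2
    _ ≤ ((K : ℝ) ^ 6 + 1) * (∫ x, ∑ i, (pd i h x) ^ 2) ^ 3 := by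
      gcongr
      linarith

theorem exists_annulus_cutoff : ∃ L : ℝ, 0 < L ∧ ∀ r : ℝ, 0 < r → ∃ η : E3 → ℝ,
    ContDiff ℝ 1 η ∧ (∀ x, 0 ≤ η x) ∧ (∀ x, η x ≤ 1) ∧
    (∀ x, x ∉ ball3 (4 * r) \ ball3 (r / 2) → η x = 0) ∧
    (∀ x ∈ ball3 (2 * r) \ ball3 r, η x = 1) ∧ ∀ i x, |pd i η x| ≤ L / r := by
  let φ : ContDiffBump (0 : E3) := ⟨2, 3, by norm_num, by norm_num⟩
  let ψ : ContDiffBump (0 : E3) := ⟨1 / 2, 1, by norm_num, by norm_num⟩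
  let F : E3 → ℝ := fun x => φ x * (1 - ψ x)
  have hF : ContDiff ℝ 1 F := φ.contDiff.mul (contDiff_const.sub ψ.contDiff)
  have hFs : HasCompactSupport F := φ.hasCompactSupport.mul_right
  obtain ⟨L, hL⟩ := (hF.continuous_fderiv one_ne_zero).bounded_above_of_compact_support
    (hFs.fderiv ℝ)
  have hL0 : 0 ≤ L := (norm_nonneg _).trans (hL 0)
  refine ⟨L + 1, by positivity, fun r hr => ⟨fun x => F (r⁻¹ • x), ?_, ?_, ?_, ?_, ?_, ?_⟩⟩
  · exact hF.comp (contDiff_const_smul _)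
  · exact fun x => mul_nonneg φ.nonneg (sub_nonneg.2 ψ.le_one)
  · exact fun x => mul_le_one₀ φ.le_one (sub_nonneg.2 ψ.le_one) (by linarith [ψ.nonneg' (r⁻¹ • x)])
  · intro x hx
    simp only [ball3, Set.mem_sdiff, mem_ball, dist_zero_right, not_and, not_not] at hx
    by_cases h : ‖x‖ < 4 * r
    · have h1 : ψ (r⁻¹ • x) = 1 := by
        apply ψ.one_of_mem_closedBall
        rw [mem_closedBall, dist_zero_right, norm_smul, norm_inv, Real.norm_of_nonneg hr.le,
          inv_mul_le_iff₀ hr]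
        change ‖x‖ ≤ r * (1 / 2)
        linarith [hx h]
      simp [F, h1]
    · have h1 : φ (r⁻¹ • x) = 0 := by
        apply φ.zero_of_le_dist
        rw [dist_zero_right, norm_smul, norm_inv, Real.norm_of_nonneg hr.le, le_inv_mul_iff₀ hr]
        change r * 3 ≤ ‖x‖
        linarith
      simp [F, h1]
  · intro x hx
    simp only [ball3, Set.mem_sdiff, mem_ball, dist_zero_right, not_lt] at hx
    have h1 : φ (r⁻¹ • x) = 1 := by
      apply φ.one_of_mem_closedBall
      rw [mem_closedBall, dist_zero_right, norm_smul, norm_inv, Real.norm_of_nonneg hr.le,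
        inv_mul_le_iff₀ hr]
      change ‖x‖ ≤ r * 2
      linarith [hx.1]
    have h2 : ψ (r⁻¹ • x) = 0 := by
      apply ψ.zero_of_le_dist
      rw [dist_zero_right, norm_smul, norm_inv, Real.norm_of_nonneg hr.le, le_inv_mul_iff₀ hr]
      change r * 1 ≤ ‖x‖
      linarith [hx.2]
    simp [F, h1, h2]
  · intro i x
    have h1 : pd i (fun x => F (r⁻¹ • x)) x = r⁻¹ * pd i F (r⁻¹ • x) := by
      simp [pd, fderiv_comp_smul]
    have h2 : |pd i F (r⁻¹ • x)| ≤ L := by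
      refine ((fderiv ℝ F (r⁻¹ • x)).le_opNorm _).trans ?_
      simpa using hL (r⁻¹ • x)
    rw [h1, abs_mul, abs_of_pos (inv_pos.2 hr), inv_mul_eq_div]
    gcongr
    linarith

theorem measurableSet_annulus (r : ℝ) : MeasurableSet (ball3 (4 * r) \ ball3 (r / 2)) :=
  measurableSet_ball.diff measurableSet_ball

theorem Continuous.integrableOn_annulus {f : E3 → ℝ} (hf : Continuous f) (a c : ℝ) :
    IntegrableOn f (ball3 a \ ball3 c) :=
  (hf.continuousOn.integrableOn_compact (isCompact_closedBall (0 : E3) a)).mono_set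
    (Set.sdiff_subset.trans ball_subset_closedBall)

theorem integral_sum_pd_mul {A : Set E3} (hA : Bornology.IsBounded A)
    {g : Fin 3 → E3 → ℝ} {h : E3 → ℝ} {h' : Fin 3 → E3 → ℝ}
    (hg : ∀ i, ContDiff ℝ 1 (g i)) (hh : Differentiable ℝ h) (hc : ∀ i, Continuous (h' i))
    (hpd : ∀ i x, pd i h x = h' i x) (h0 : ∀ x, x ∉ A → h x = 0)
    (h0' : ∀ i x, x ∉ A → h' i x = 0) :
    ∫ x in A, (∑ i, pd i (g i) x) * h x = -∫ x in A, ∑ i, g i x * h' i x := by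
  have cs : HasCompactSupport h := HasCompactSupport.of_support_subset_isCompact
    hA.isCompact_closure fun x hx => subset_closure (by_contra fun hn => hx (h0 x hn))
  have cs' : ∀ i, HasCompactSupport (h' i) := fun i =>
    HasCompactSupport.of_support_subset_isCompact
      hA.isCompact_closure fun x hx => subset_closure (by_contra fun hn => hx (h0' i x hn))
  rw [setIntegral_eq_integral_of_forall_compl_eq_zero (fun x hx => by simp [h0 x hx]),
    setIntegral_eq_integral_of_forall_compl_eq_zero (fun x hx => by simp [h0' _ x hx])]
  have I1 : ∀ i, Integrable (fun x => pd i (g i) x * h x) := fun i =>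
    ((continuous_pd (hg i) i).mul hh.continuous).integrable_of_hasCompactSupport cs.mul_left
  have I2 : ∀ i, Integrable (fun x => g i x * h' i x) := fun i =>
    ((hg i).continuous.mul (hc i)).integrable_of_hasCompactSupport (cs' i).mul_left
  have I3 : ∀ i, Integrable (fun x => g i x * h x) := fun i =>
    ((hg i).continuous.mul hh.continuous).integrable_of_hasCompactSupport cs.mul_left
  simp_rw [Finset.sum_mul]
  rw [integral_finsetSum _ fun i _ => I1 i, integral_finsetSum _ fun i _ => I2 i,
    ← Finset.sum_neg_distrib]
  refine Finset.sum_congr rfl fun i _ => ?_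
  have key := integral_mul_fderiv_eq_neg_fderiv_mul_of_integrable (μ := (volume : Measure E3))
    (f := g i) (g := h) (v := EuclideanSpace.single i 1) (I1 i)
    (by simpa only [pd, ← hpd i] using I2 i)
    (I3 i) (fun x _ => ((hg i).differentiable one_ne_zero) x) (fun x _ => hh x)
  rw [eq_comm, neg_eq_iff_eq_neg]
  simpa only [pd, ← hpd i] using key

theorem weighted_young {s r κ a d V : ℝ} (hs1 : 3 < s) (hs2 : s ≤ 6) (hr : 0 < r) (hκ : 0 < κ)
    (ha : 0 ≤ a) (hd : 0 ≤ d) (hV : 0 ≤ V) :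
    a * d * V ≤ r * κ ^ (9 / (s + 6)) * (a ^ s / r ^ (2 + s / 3) + d ^ 2 / κ + V ^ 6 / κ ^ 3)
      + V ^ 3 / 3 := by
  rcases ha.eq_or_lt with rfl | ha
  · rw [zero_mul, zero_mul]; positivity
  rcases hd.eq_or_lt with rfl | hd
  · rw [mul_zero, zero_mul]; positivity
  rcases hV.eq_or_lt with rfl | hV
  · rw [mul_zero]; positivity
  have hs0 : 0 < s := by linarith
  have hs6 : s + 6 ≠ 0 := by linarith
  have i1 : 1 / s ≤ 1 / 3 := one_div_le_one_div_of_le (by norm_num) hs1.le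
  have i2 : 1 / 6 ≤ 1 / s := one_div_le_one_div_of_le hs0 hs2
  set T := r * κ ^ (9 / (s + 6)) with hT
  have hT0 : 0 < T := by positivity
  have key := Real.geom_mean_le_arith_mean4_weighted (w₁ := 1 / s) (w₂ := 1 / 2)
    (w₃ := 2 / 3 - 2 * (1 / s)) (w₄ := 1 / s - 1 / 6) (p₁ := T * (a ^ s / r ^ (2 + s / 3)))
    (p₂ := T * (d ^ 2 / κ)) (p₃ := V ^ 3) (p₄ := T * (V ^ 6 / κ ^ 3))
    (by positivity) (by norm_num) (by linarith) (by linarith)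
    (by positivity) (by positivity) (by positivity) (by positivity) (by ring)
  have e : (T * (a ^ s / r ^ (2 + s / 3))) ^ (1 / s) * (T * (d ^ 2 / κ)) ^ ((1 : ℝ) / 2) *
      (V ^ 3) ^ (2 / 3 - 2 * (1 / s)) * (T * (V ^ 6 / κ ^ 3)) ^ (1 / s - 1 / 6) = a * d * V := by
    rw [hT]
    obtain ⟨α, rfl⟩ : ∃ α, rexp α = a := ⟨_, Real.exp_log ha⟩
    obtain ⟨β, rfl⟩ : ∃ α, rexp α = d := ⟨_, Real.exp_log hd⟩
    obtain ⟨γ, rfl⟩ : ∃ α, rexp α = V := ⟨_, Real.exp_log hV⟩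
    obtain ⟨ρ, rfl⟩ : ∃ α, rexp α = r := ⟨_, Real.exp_log hr⟩
    obtain ⟨k, rfl⟩ : ∃ α, rexp α = κ := ⟨_, Real.exp_log hκ⟩
    simp only [← Real.exp_mul, ← Real.exp_add, ← Real.exp_sub, ← Real.exp_nat_mul]
    congr 1
    push_cast
    field_simp
    ring
  rw [e] at key
  have q1 : 0 ≤ T * (a ^ s / r ^ (2 + s / 3)) := by positivity
  have q2 : 0 ≤ T * (d ^ 2 / κ) := by positivity
  have q3 : 0 ≤ V ^ 3 := by positivity
  have q4 : 0 ≤ T * (V ^ 6 / κ ^ 3) := by positivity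
  have b1 := mul_le_of_le_one_left q1 (show 1 / s ≤ 1 by linarith)
  have b2 := mul_le_of_le_one_left q2 (show (1 : ℝ) / 2 ≤ 1 by norm_num)
  have b3 := mul_le_mul_of_nonneg_right (show 2 / 3 - 2 * (1 / s) ≤ 1 / 3 by linarith) q3
  have b4 := mul_le_of_le_one_left q4 (show 1 / s - 1 / 6 ≤ 1 by linarith)
  linarith

theorem mul_sq_le_cube {a V : ℝ} (ha : 0 ≤ a) (hV : 0 ≤ V) :
    a * V ^ 2 ≤ V ^ 3 / 9 + 81 * a ^ 3 := by
  rcases le_total (9 * a) V with h | h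
  · nlinarith [mul_le_mul_of_nonneg_right h (sq_nonneg V), pow_nonneg ha 3]
  · have : V ^ 2 ≤ (9 * a) ^ 2 := by gcongr
    nlinarith [mul_le_mul_of_nonneg_left this ha, pow_nonneg hV 3]

theorem rpow_le_rpow_add {a l s q : ℝ} (ha : 0 ≤ a) (hl : 0 < l) (hq : 0 ≤ q) (hqs : q ≤ s) :
    a ^ q ≤ l ^ q + l ^ (q - s) * a ^ s := by
  rcases le_total a l with h | h
  · have : a ^ q ≤ l ^ q := by gcongr
    have : 0 ≤ l ^ (q - s) * a ^ s := by positivity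
    linarith
  · have ha' : 0 < a := hl.trans_le h
    have h1 : a ^ (q - s) ≤ l ^ (q - s) := Real.rpow_le_rpow_of_nonpos hl h (by linarith)
    have h2 : a ^ q = a ^ (q - s) * a ^ s := by rw [← Real.rpow_add ha']; ring_nf
    have h3 : a ^ (q - s) * a ^ s ≤ l ^ (q - s) * a ^ s := by gcongr
    have : 0 ≤ l ^ q := by positivity
    linarith

theorem l2_pointwise {r L g p f η e : ℝ} (hr : 0 < r) (h0 : 0 ≤ η) (h1 : η ≤ 1)
    (he : |e| ≤ L / r) :
    -(g * (f * (2 * η * e) + η ^ 2 * p)) ≤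
      (f * η) ^ 2 / 6 + (r ^ 2 * p ^ 2 + (1 + 6 * L ^ 2) * r⁻¹ ^ 2 * g ^ 2) := by
  have he2 : e ^ 2 ≤ L ^ 2 * r⁻¹ ^ 2 := by
    rw [← mul_pow, ← div_eq_mul_inv, ← sq_abs e]
    gcongr
  have a1 : -(g * p * η ^ 2) ≤ r ^ 2 * p ^ 2 + r⁻¹ ^ 2 * g ^ 2 := by
    have hη : η ^ 2 ≤ 1 := pow_le_one₀ h0 h1
    have h2 : |g * p| ≤ r ^ 2 * p ^ 2 + r⁻¹ ^ 2 * g ^ 2 := by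
      have hrr : r * r⁻¹ = 1 := mul_inv_cancel₀ hr.ne'
      have hgp : g * p = (r * p) * (r⁻¹ * g) := by linear_combination -(g * p) * hrr
      rw [hgp, abs_le]
      constructor <;> nlinarith [sq_nonneg (r * p + r⁻¹ * g), sq_nonneg (r * p - r⁻¹ * g),
        sq_nonneg (r * p), sq_nonneg (r⁻¹ * g)]
    calc -(g * p * η ^ 2) ≤ |g * p * η ^ 2| := neg_le_abs _
      _ = |g * p| * η ^ 2 := by rw [abs_mul, abs_of_nonneg (sq_nonneg η)]
      _ ≤ |g * p| := mul_le_of_le_one_right (abs_nonneg _) hη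
      _ ≤ _ := h2
  have a2 : -(2 * g * (f * η) * e) ≤ (f * η) ^ 2 / 6 + 6 * (g ^ 2 * e ^ 2) := by
    nlinarith [sq_nonneg (f * η + 6 * (g * e))]
  have a3 := mul_le_mul_of_nonneg_left he2 (sq_nonneg g)
  nlinarith

theorem l2_estimate {r L : ℝ} (hr : 0 < r) {η f : E3 → ℝ} {g : Fin 3 → E3 → ℝ}
    (hη : ContDiff ℝ 1 η) (h0 : ∀ x, 0 ≤ η x) (h1 : ∀ x, η x ≤ 1)
    (hz : ∀ x, x ∉ ball3 (4 * r) \ ball3 (r / 2) → η x = 0)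
    (hd : ∀ i x, |pd i η x| ≤ L / r) (hf : ContDiff ℝ 1 f) (hg : ∀ i, ContDiff ℝ 1 (g i))
    (hfg : ∀ x, f x = ∑ i, pd i (g i) x) :
    ∫ x in ball3 (4 * r) \ ball3 (r / 2), (f x * η x) ^ 2 ≤
      2 * (r ^ 2 * (∫ x in ball3 (4 * r) \ ball3 (r / 2), ∑ i, pd i f x ^ 2) +
        (1 + 6 * L ^ 2) * r⁻¹ ^ 2 *
          ∑ i, ∫ x in ball3 (4 * r) \ ball3 (r / 2), |g i x| ^ 2) := by
  set A := ball3 (4 * r) \ ball3 (r / 2) with hA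
  have cf := hf.continuous
  have cη := hη.continuous
  have cg := fun i => (hg i).continuous
  have cpf := fun i => continuous_pd hf i
  have cpη := fun i => continuous_pd hη i
  have df := hf.differentiable one_ne_zero
  have dη := hη.differentiable one_ne_zero
  have key := integral_sum_pd_mul (A := A) (isBounded_ball.subset Set.sdiff_subset) hg
    (h := fun x => f x * η x ^ 2)
    (h' := fun i x => f x * (2 * η x * pd i η x) + η x ^ 2 * pd i f x)
    (df.mul (dη.pow 2)) (fun i => by fun_prop)
    (fun i x => by
      rw [pd_mul (df x) ((dη x).fun_pow 2), pd_pow (dη x)]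
      simp)
    (fun x hx => by simp [hz x hx]) (fun i x hx => by simp [hz x hx])
  simp_rw [← hfg] at key
  have hint : ∀ {F : E3 → ℝ}, Continuous F → IntegrableOn F A :=
    fun hF => hF.integrableOn_annulus _ _
  have step : ∫ x in A, (f x * η x) ^ 2 ≤ ∫ x in A, ((f x * η x) ^ 2 / 2 +
      (r ^ 2 * (∑ i, pd i f x ^ 2) + (1 + 6 * L ^ 2) * r⁻¹ ^ 2 * ∑ i, |g i x| ^ 2)) := by
    calc ∫ x in A, (f x * η x) ^ 2 = ∫ x in A, f x * (f x * η x ^ 2) := by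
          congr 1 with x; ring
      _ = ∫ x in A, -∑ i, g i x * (f x * (2 * η x * pd i η x) + η x ^ 2 * pd i f x) := by
          rw [key, integral_neg]
      _ ≤ _ := by
          refine setIntegral_mono (hint (by fun_prop)) (hint (by fun_prop)) fun x => ?_
          have := Finset.sum_le_sum fun i (_ : i ∈ Finset.univ) =>
            l2_pointwise (g := g i x) (p := pd i f x) (f := f x) hr (h0 x) (h1 x) (hd i x)
          simp only [Fin.sum_univ_three, sq_abs] at this ⊢
          linarith
  rw [integral_add (hint (by fun_prop)) (hint (by fun_prop)),
    integral_add (hint (by fun_prop)) (hint (by fun_prop)), integral_const_mul,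
    integral_const_mul, integral_div,
    integral_finsetSum (f := fun i x => |g i x| ^ 2) _ fun i _ => hint (by fun_prop)] at step
  linarith

theorem sobolev_estimate {S : ℝ} (hS0 : 0 < S) (hS : ∀ h : E3 → ℝ, ContDiff ℝ 1 h →
      HasCompactSupport h → ∫ x, h x ^ 6 ≤ S * (∫ x, ∑ i, (pd i h x) ^ 2) ^ 3)
    {r L : ℝ} {η f : E3 → ℝ}
    (hη : ContDiff ℝ 1 η) (h0 : ∀ x, 0 ≤ η x) (h1 : ∀ x, η x ≤ 1)
    (hz : ∀ x, x ∉ ball3 (4 * r) \ ball3 (r / 2) → η x = 0)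
    (hd : ∀ i x, |pd i η x| ≤ L / r) (hf : ContDiff ℝ 1 f) :
    ∫ x in ball3 (4 * r) \ ball3 (r / 2), (|f x| * η x ^ 2) ^ 6 ≤
      S * (2 * (∫ x in ball3 (4 * r) \ ball3 (r / 2), ∑ i, pd i f x ^ 2) +
        24 * L ^ 2 * r⁻¹ ^ 2 *
          ∫ x in ball3 (4 * r) \ ball3 (r / 2), (f x * η x) ^ 2) ^ 3 := by
  set A := ball3 (4 * r) \ ball3 (r / 2) with hA
  have cf := hf.continuous
  have cη := hη.continuous
  have cpf := fun i => continuous_pd hf i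
  have cpη := fun i => continuous_pd hη i
  have df := hf.differentiable one_ne_zero
  have dη := hη.differentiable one_ne_zero
  have hint : ∀ {F : E3 → ℝ}, Continuous F → IntegrableOn F A :=
    fun hF => hF.integrableOn_annulus _ _
  have hpd : ∀ i x, pd i (fun x => f x * η x ^ 2) x
      = f x * (2 * η x * pd i η x) + η x ^ 2 * pd i f x := fun i x => by
    rw [pd_mul (df x) ((dη x).fun_pow 2), pd_pow (dη x)]
    simp
  have cs : HasCompactSupport fun x => f x * η x ^ 2 :=
    HasCompactSupport.of_support_subset_isCompact (isCompact_closedBall (0 : E3) (4 * r))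
      fun x hx => ball_subset_closedBall
        (show x ∈ A from by_contra fun hn => hx (by simp [hz x hn])).1
  have key := hS _ (hf.mul (hη.pow 2)) cs
  have e6 : ∫ x in A, (f x * η x ^ 2) ^ 6 = ∫ x, (f x * η x ^ 2) ^ 6 :=
    setIntegral_eq_integral_of_forall_compl_eq_zero fun x hx => by simp [hz x hx]
  have e2 : ∫ x in A, ∑ i, pd i (fun x => f x * η x ^ 2) x ^ 2 =
      ∫ x, ∑ i, pd i (fun x => f x * η x ^ 2) x ^ 2 :=
    setIntegral_eq_integral_of_forall_compl_eq_zero fun x hx => by simp [hpd, hz x hx]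
  rw [← e6, ← e2] at key
  have habs : ∀ x, (|f x| * η x ^ 2) ^ 6 = (f x * η x ^ 2) ^ 6 := fun x => by
    rw [mul_pow, mul_pow, Even.pow_abs (by decide)]
  simp_rw [habs]
  refine key.trans ?_
  have hnn : 0 ≤ ∫ x in A, ∑ i, pd i (fun x => f x * η x ^ 2) x ^ 2 :=
    integral_nonneg fun x => Finset.sum_nonneg fun i _ => sq_nonneg _
  gcongr
  rw [← integral_const_mul, ← integral_const_mul,
    ← integral_add (hint (by fun_prop)) (hint (by fun_prop))]
  simp only [hpd]
  refine setIntegral_mono (hint (by fun_prop)) (hint (by fun_prop)) fun x => ?_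
  have hi : ∀ i, (f x * (2 * η x * pd i η x) + η x ^ 2 * pd i f x) ^ 2 ≤
      2 * pd i f x ^ 2 + 8 * L ^ 2 * r⁻¹ ^ 2 * (f x * η x) ^ 2 := by
    intro i
    have he2 : pd i η x ^ 2 ≤ L ^ 2 * r⁻¹ ^ 2 := by
      rw [← mul_pow, ← div_eq_mul_inv, ← sq_abs]
      gcongr
      exact hd i x
    have a1 : (η x ^ 2 * pd i f x) ^ 2 ≤ pd i f x ^ 2 := by
      rw [mul_pow, ← pow_mul]
      exact mul_le_of_le_one_left (sq_nonneg _) (pow_le_one₀ (h0 x) (h1 x))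
    have a2 := mul_le_mul_of_nonneg_left he2 (sq_nonneg (f x * η x))
    nlinarith [sq_nonneg (f x * (2 * η x * pd i η x) - η x ^ 2 * pd i f x)]
  have := Finset.sum_le_sum fun i (_ : i ∈ Finset.univ) => hi i
  simp only [Fin.sum_univ_three] at this ⊢
  linarith

theorem l3_pointwise {s r κ L g p f η e : ℝ} (hs1 : 3 < s) (hs2 : s ≤ 6) (hr : 0 < r)
    (hκ : 0 < κ) (h0 : 0 ≤ η) (h1 : η ≤ 1) (he : |e| ≤ L / r) :
    -(g * (f * |f| * (6 * η ^ 5 * e) + η ^ 6 * (2 * |f| * p))) ≤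
      2 / 9 * (|f| * η ^ 2) ^ 3 + (r * κ ^ (9 / (s + 6)) *
        (6 ^ s * |g| ^ s / r ^ (2 + s / 3) + p ^ 2 / κ + (|f| * η ^ 2) ^ 6 / κ ^ 3)
        + 81 * (6 * L) ^ 3 * r⁻¹ ^ 3 * |g| ^ 3) := by
  have hL : 0 ≤ L := by
    have := (abs_nonneg e).trans he
    rwa [le_div_iff₀ hr, zero_mul] at this
  set V := |f| * η ^ 2 with hV
  have hV0 : 0 ≤ V := by positivity
  have y1 := weighted_young (a := 6 * |g|) (d := |p|) hs1 hs2 hr hκ (by positivity)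
    (abs_nonneg p) hV0
  rw [Real.mul_rpow (by norm_num) (abs_nonneg g), sq_abs] at y1
  have y2 := mul_sq_le_cube (a := 6 * L * r⁻¹ * |g|) (V := V) (by positivity) hV0
  have b1 : -(g * (f * |f| * (6 * η ^ 5 * e))) ≤ 6 * L * r⁻¹ * |g| * V ^ 2 := by
    calc -(g * (f * |f| * (6 * η ^ 5 * e))) ≤ |g * (f * |f| * (6 * η ^ 5 * e))| := neg_le_abs _
      _ = 6 * (|g| * |f| ^ 2 * η ^ 4) * (η * |e|) := by
        simp only [abs_mul, abs_abs, abs_pow, abs_of_nonneg h0]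
        rw [abs_of_pos (by norm_num : (0 : ℝ) < 6)]
        ring
      _ ≤ 6 * (|g| * |f| ^ 2 * η ^ 4) * (1 * (L / r)) := by gcongr
      _ = _ := by rw [hV]; ring
  have b2 : -(g * (η ^ 6 * (2 * |f| * p))) ≤ 6 * |g| * |p| * V / 3 := by
    calc -(g * (η ^ 6 * (2 * |f| * p))) ≤ |g * (η ^ 6 * (2 * |f| * p))| := neg_le_abs _
      _ = 2 * (|g| * |p| * |f| * η ^ 2) * η ^ 4 := by
        simp only [abs_mul, abs_abs, abs_pow, abs_of_nonneg h0]
        rw [abs_of_pos (by norm_num : (0 : ℝ) < 2)]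
        ring
      _ ≤ 2 * (|g| * |p| * |f| * η ^ 2) * 1 := by
        gcongr
        exact pow_le_one₀ h0 h1
      _ = _ := by rw [hV]; ring
  have b3 : 0 ≤ r * κ ^ (9 / (s + 6)) *
      (6 ^ s * |g| ^ s / r ^ (2 + s / 3) + p ^ 2 / κ + V ^ 6 / κ ^ 3) := by positivity
  linarith

theorem l3_estimate {s r κ L : ℝ} (hs1 : 3 < s) (hs2 : s ≤ 6) (hr : 0 < r) (hκ : 0 < κ)
    {η f : E3 → ℝ} {g : Fin 3 → E3 → ℝ}
    (hη : ContDiff ℝ 1 η) (h0 : ∀ x, 0 ≤ η x) (h1 : ∀ x, η x ≤ 1)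
    (hz : ∀ x, x ∉ ball3 (4 * r) \ ball3 (r / 2) → η x = 0)
    (hd : ∀ i x, |pd i η x| ≤ L / r) (hf : ContDiff ℝ 1 f) (hg : ∀ i, ContDiff ℝ 1 (g i))
    (hfg : ∀ x, f x = ∑ i, pd i (g i) x) :
    ∫ x in ball3 (4 * r) \ ball3 (r / 2), (|f x| * η x ^ 2) ^ 3 ≤
      3 * (r * κ ^ (9 / (s + 6)) *
        (6 ^ s / r ^ (2 + s / 3) * (∑ i, ∫ x in ball3 (4 * r) \ ball3 (r / 2), |g i x| ^ s)
          + (∫ x in ball3 (4 * r) \ ball3 (r / 2), ∑ i, pd i f x ^ 2) / κ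
          + 3 * (∫ x in ball3 (4 * r) \ ball3 (r / 2), (|f x| * η x ^ 2) ^ 6) / κ ^ 3)
        + 81 * (6 * L) ^ 3 * r⁻¹ ^ 3 *
          ∑ i, ∫ x in ball3 (4 * r) \ ball3 (r / 2), |g i x| ^ 3) := by
  set A := ball3 (4 * r) \ ball3 (r / 2) with hA
  have hs0 : 0 ≤ s := by linarith
  have cf := hf.continuous
  have cη := hη.continuous
  have cg := fun i => (hg i).continuous
  have cpf := fun i => continuous_pd hf i
  have cpη := fun i => continuous_pd hη i
  have cgs : ∀ i, Continuous fun x => |g i x| ^ s :=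
    fun i => (cg i).abs.rpow_const fun x => Or.inr hs0
  have df := hf.differentiable one_ne_zero
  have dη := hη.differentiable one_ne_zero
  have dff : Differentiable ℝ fun x => f x * |f x| := fun x =>
    ((hasDerivAt_mul_abs (f x)).comp_hasFDerivAt x (df x).hasFDerivAt).differentiableAt
  have key := integral_sum_pd_mul (A := A) (isBounded_ball.subset Set.sdiff_subset) hg
    (h := fun x => f x * |f x| * η x ^ 6)
    (h' := fun i x => f x * |f x| * (6 * η x ^ 5 * pd i η x) + η x ^ 6 * (2 * |f x| * pd i f x))
    (dff.mul (dη.pow 6)) (fun i => by fun_prop)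
    (fun i x => by
      rw [pd_mul (dff x) ((dη x).fun_pow 6), pd_pow (dη x),
        pd_comp (hasDerivAt_mul_abs (f x)) (df x)]
      simp)
    (fun x hx => by simp [hz x hx]) (fun i x hx => by simp [hz x hx])
  simp_rw [← hfg] at key
  have hint : ∀ {F : E3 → ℝ}, Continuous F → IntegrableOn F A :=
    fun hF => hF.integrableOn_annulus _ _
  set T := r * κ ^ (9 / (s + 6)) with hT
  have step : ∫ x in A, (|f x| * η x ^ 2) ^ 3 ≤ ∫ x in A, (2 / 3 * (|f x| * η x ^ 2) ^ 3 +
      (T * (6 ^ s / r ^ (2 + s / 3) * (∑ i, |g i x| ^ s) + (∑ i, pd i f x ^ 2) / κ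
        + 3 * (|f x| * η x ^ 2) ^ 6 / κ ^ 3)
        + 81 * (6 * L) ^ 3 * r⁻¹ ^ 3 * ∑ i, |g i x| ^ 3)) := by
    calc ∫ x in A, (|f x| * η x ^ 2) ^ 3 = ∫ x in A, f x * (f x * |f x| * η x ^ 6) := by
          congr 1 with x
          linear_combination (|f x| * η x ^ 6) * sq_abs (f x)
      _ = ∫ x in A, -∑ i, g i x * (f x * |f x| * (6 * η x ^ 5 * pd i η x)
            + η x ^ 6 * (2 * |f x| * pd i f x)) := by
          rw [key, integral_neg]
      _ ≤ _ := by
          refine setIntegral_mono (hint (by fun_prop)) (hint (by fun_prop)) fun x => ?_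
          have := Finset.sum_le_sum fun i (_ : i ∈ Finset.univ) =>
            l3_pointwise (g := g i x) (p := pd i f x) (f := f x) hs1 hs2 hr hκ (h0 x) (h1 x)
              (hd i x)
          simp only [Fin.sum_univ_three, ← hT] at this ⊢
          refine (le_trans (le_of_eq ?_) this).trans (le_of_eq ?_) <;> ring
  rw [integral_add (hint (by fun_prop)) (hint (by fun_prop)),
    integral_add (hint (by fun_prop)) (hint (by fun_prop)), integral_const_mul,
    integral_const_mul, integral_const_mul,
    integral_add (hint (by fun_prop)) (hint (by fun_prop)),
    integral_add (hint (by fun_prop)) (hint (by fun_prop)), integral_div, integral_div,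
    integral_const_mul, integral_const_mul,
    integral_finsetSum (f := fun i x => |g i x| ^ s) _ fun i _ => hint (by fun_prop),
    integral_finsetSum (f := fun i x => |g i x| ^ 3) _ fun i _ => hint (by fun_prop)] at step
  linarith

theorem volume_ball3_toReal {r : ℝ} (hr : 0 < r) :
    (volume (ball3 r)).toReal = r ^ 3 * (volume (ball3 1)).toReal := by
  rw [ball3, Measure.addHaar_ball_of_pos _ _ hr, ENNReal.toReal_mul,
    ENNReal.toReal_ofReal (by positivity)]
  simp [ball3]

theorem volume_ball3_one_pos : 0 < (volume (ball3 1)).toReal :=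
  ENNReal.toReal_pos (measure_ball_pos volume _ one_pos).ne' measure_ball_lt_top.ne

theorem integral_abs_rpow_annulus_le {s q M r : ℝ} (hs : 0 < s) (hq : 0 ≤ q) (hqs : q ≤ s)
    (hr : 0 < r) {g : E3 → ℝ} (hg : Continuous g)
    (hM : ∫ x in ball3 (4 * r) \ ball3 (r / 2), |g x| ^ s ≤ M * r ^ (2 + s / 3)) :
    ∫ x in ball3 (4 * r) \ ball3 (r / 2), |g x| ^ q ≤
      (64 * (volume (ball3 1)).toReal + M) * r ^ (3 + q * (1 / 3 - 1 / s)) := by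
  set A := ball3 (4 * r) \ ball3 (r / 2) with hA
  set l : ℝ := r ^ (1 / 3 - 1 / s) with hl
  have hl0 : 0 < l := by positivity
  have hint : ∀ {F : E3 → ℝ}, Continuous F → IntegrableOn F A :=
    fun hF => hF.integrableOn_annulus _ _
  have c1 : Continuous fun x => |g x| ^ q := hg.abs.rpow_const fun x => Or.inr hq
  have c2 : Continuous fun x => |g x| ^ s := hg.abs.rpow_const fun x => Or.inr hs.le
  have hvol : (volume A).toReal ≤ 64 * (volume (ball3 1)).toReal * r ^ 3 := by
    calc (volume A).toReal ≤ (volume (ball3 (4 * r))).toReal :=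
          ENNReal.toReal_mono measure_ball_lt_top.ne (measure_mono Set.sdiff_subset)
      _ = _ := by rw [volume_ball3_toReal (by positivity)]; ring
  have e1 : r ^ 3 * l ^ q = r ^ (3 + q * (1 / 3 - 1 / s)) := by
    rw [hl, ← Real.rpow_mul hr.le, ← Real.rpow_natCast, ← Real.rpow_add hr]
    congr 1
    push_cast
    ring
  have e2 : l ^ (q - s) * r ^ (2 + s / 3) = r ^ (3 + q * (1 / 3 - 1 / s)) := by
    rw [hl, ← Real.rpow_mul hr.le, ← Real.rpow_add hr]
    congr 1
    field_simp
    ring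
  calc ∫ x in A, |g x| ^ q ≤ ∫ x in A, (l ^ q + l ^ (q - s) * |g x| ^ s) :=
        setIntegral_mono (hint c1) (hint (by fun_prop)) fun x =>
          rpow_le_rpow_add (abs_nonneg _) hl0 hq hqs
    _ = (volume A).toReal * l ^ q + l ^ (q - s) * ∫ x in A, |g x| ^ s := by
        rw [integral_add (hint continuous_const) (hint (by fun_prop)), integral_const_mul,
          setIntegral_const, smul_eq_mul, Measure.real]
    _ ≤ 64 * (volume (ball3 1)).toReal * r ^ 3 * l ^ q
          + l ^ (q - s) * (M * r ^ (2 + s / 3)) := by gcongr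
    _ = _ := by linear_combination 64 * (volume (ball3 1)).toReal * e1 + M * e2

theorem exists_scalar_cubic_const {s : ℝ} (hs1 : 3 < s) (hs2 : s ≤ 6) {M : ℝ} (hM : 0 < M) :
    ∃ C : ℝ, 0 < C ∧ ∀ r : ℝ, 1 < r → ∀ (f : E3 → ℝ) (g : Fin 3 → E3 → ℝ),
      ContDiff ℝ 1 f → (∀ i, ContDiff ℝ 1 (g i)) → (∀ x, f x = ∑ i, pd i (g i) x) →
      (∀ i, ∫ x in ball3 (4 * r) \ ball3 (r / 2), |g i x| ^ s ≤ M * r ^ (2 + s / 3)) →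
      ∫ x in ball3 (2 * r) \ ball3 r, |f x| ^ 3 ≤ C * (r *
        ((∫ x in ball3 (4 * r) \ ball3 (r / 2), ∑ i, pd i f x ^ 2) ^ (9 / (s + 6))
          + r ^ (-(3 / s)))) := by
  obtain ⟨L, hL, hcut⟩ := exists_annulus_cutoff
  obtain ⟨S, hS0, hS⟩ := exists_sobolev_const
  have hω := volume_ball3_one_pos
  set Q := 64 * (volume (ball3 1)).toReal + M with hQ
  have hQ0 : 0 < Q := by positivity
  have hs0 : 0 < s := by linarith
  set c₁ := 2 * (1 + (1 + 6 * L ^ 2) * (3 * Q)) with hc₁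
  set c₂ := 2 + 24 * L ^ 2 * c₁ with hc₂
  set c₃ := 6 ^ s * (3 * M) + 1 + 3 * (S * c₂ ^ 3) with hc₃
  set c₄ := 81 * (6 * L) ^ 3 * (3 * Q) with hc₄
  have hc₁0 : 0 < c₁ := by positivity
  have hc₂0 : 0 < c₂ := by positivity
  have hc₃0 : 0 < c₃ := by positivity
  have hc₄0 : 0 < c₄ := by positivity
  refine ⟨3 * (c₃ + c₄), by positivity, fun r hr1 f g hf hg hfg hgM => ?_⟩
  have hr : 0 < r := by linarith
  obtain ⟨η, hη, h0, h1, hz, hone, hd⟩ := hcut r hr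
  have cf := hf.continuous
  have cη := hη.continuous
  have Y := l2_estimate hr hη h0 h1 hz hd hf hg hfg
  have Z := sobolev_estimate hS0 hS hη h0 h1 hz hd hf
  set A := ball3 (4 * r) \ ball3 (r / 2) with hA
  have hint : ∀ {F : E3 → ℝ}, Continuous F → IntegrableOn F A :=
    fun hF => hF.integrableOn_annulus _ _
  set D := ∫ x in A, ∑ i, pd i f x ^ 2 with hD
  have hD0 : 0 ≤ D := integral_nonneg fun x => Finset.sum_nonneg fun i _ => sq_nonneg _
  set ε : ℝ := r ^ (-(1 / 3) - 2 / s) with hε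
  have hε0 : 0 < ε := by positivity
  set κ := D + ε with hκdef
  have hκ : 0 < κ := by positivity
  have X := l3_estimate hs1 hs2 hr hκ hη h0 h1 hz hd hf hg hfg
  rw [← hA, ← hD] at X
  have G2 : ∑ i, ∫ x in A, |g i x| ^ 2 ≤ 3 * Q * r ^ (3 + 2 * (1 / 3 - 1 / s)) := by
    have := Finset.sum_le_sum fun i (_ : i ∈ Finset.univ) =>
      integral_abs_rpow_annulus_le hs0 zero_le_two (by linarith) hr (hg i).continuous (hgM i)
    simp only [Real.rpow_two, Finset.sum_const, Finset.card_univ, Fintype.card_fin,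
      nsmul_eq_mul, ← hQ, ← hA] at this
    push_cast at this
    linarith
  have G3 : ∑ i, ∫ x in A, |g i x| ^ 3 ≤ 3 * Q * r ^ (3 + 3 * (1 / 3 - 1 / s)) := by
    have := Finset.sum_le_sum fun i (_ : i ∈ Finset.univ) =>
      integral_abs_rpow_annulus_le hs0 (q := (3 : ℕ)) (by norm_num) (by norm_num; linarith)
        hr (hg i).continuous (hgM i)
    simp only [Real.rpow_natCast, Finset.sum_const, Finset.card_univ, Fintype.card_fin,
      nsmul_eq_mul, ← hQ, ← hA] at this
    push_cast at this
    linarith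
  have Gs : ∑ i, ∫ x in A, |g i x| ^ s ≤ 3 * M * r ^ (2 + s / 3) := by
    have := Finset.sum_le_sum fun i (_ : i ∈ Finset.univ) => hgM i
    simp only [Finset.sum_const, Finset.card_univ, Fintype.card_fin,
      nsmul_eq_mul] at this
    push_cast at this
    linarith
  have p2 : r⁻¹ ^ 2 * r ^ (3 + 2 * (1 / 3 - 1 / s)) = r ^ 2 * ε := by
    rw [hε, inv_pow, inv_mul_eq_iff_eq_mul₀ (by positivity)]
    simp only [← Real.rpow_natCast, ← Real.rpow_add hr]
    congr 1
    push_cast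
    ring
  have p3 : r⁻¹ ^ 3 * r ^ (3 + 3 * (1 / 3 - 1 / s)) = r * r ^ (-(3 / s)) := by
    rw [inv_pow, inv_mul_eq_iff_eq_mul₀ (by positivity), ← Real.rpow_one_add' hr.le (by
      have : 3 / s < 1 := (div_lt_one hs0).2 hs1
      linarith)]
    simp only [← Real.rpow_natCast, ← Real.rpow_add hr]
    congr 1
    push_cast
    ring
  have Y' : ∫ x in A, (f x * η x) ^ 2 ≤ c₁ * (r ^ 2 * κ) := by
    refine Y.trans ?_
    calc 2 * (r ^ 2 * D + (1 + 6 * L ^ 2) * r⁻¹ ^ 2 * ∑ i, ∫ x in A, |g i x| ^ 2)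
        ≤ 2 * (r ^ 2 * D + (1 + 6 * L ^ 2) * r⁻¹ ^ 2 *
          (3 * Q * r ^ (3 + 2 * (1 / 3 - 1 / s)))) := by gcongr
      _ = 2 * (r ^ 2 * D + (1 + 6 * L ^ 2) * (3 * Q) * (r ^ 2 * ε)) := by rw [← p2]; ring
      _ ≤ c₁ * (r ^ 2 * κ) := by
        have t1 : 0 ≤ (1 + 6 * L ^ 2) * (3 * Q) * (r ^ 2 * D) := by positivity
        have t2 : 0 ≤ r ^ 2 * ε := by positivity
        rw [hc₁, hκdef]
        linarith
  have Z' : ∫ x in A, (|f x| * η x ^ 2) ^ 6 ≤ S * c₂ ^ 3 * κ ^ 3 := by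
    refine Z.trans ?_
    have hY0 : 0 ≤ ∫ x in A, (f x * η x) ^ 2 := integral_nonneg fun x => sq_nonneg _
    rw [mul_assoc S, ← mul_pow]
    gcongr
    calc 2 * D + 24 * L ^ 2 * r⁻¹ ^ 2 * ∫ x in A, (f x * η x) ^ 2
        ≤ 2 * κ + 24 * L ^ 2 * r⁻¹ ^ 2 * (c₁ * (r ^ 2 * κ)) := by
          gcongr
          linarith
      _ = c₂ * κ := by
          rw [hc₂]
          field_simp
  have hT : κ ^ (9 / (s + 6)) ≤ D ^ (9 / (s + 6)) + r ^ (-(3 / s)) := by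
    have e : ε ^ (9 / (s + 6)) = r ^ (-(3 / s)) := by
      rw [hε, ← Real.rpow_mul hr.le]
      congr 1
      field_simp
      ring
    rw [← e]
    exact Real.rpow_add_le_add_rpow hD0 hε0.le (by positivity)
      ((div_le_one (by positivity)).2 (by linarith))
  have b1 : 6 ^ s / r ^ (2 + s / 3) * (∑ i, ∫ x in A, |g i x| ^ s) ≤ 6 ^ s * (3 * M) := by
    calc 6 ^ s / r ^ (2 + s / 3) * (∑ i, ∫ x in A, |g i x| ^ s)
        ≤ 6 ^ s / r ^ (2 + s / 3) * (3 * M * r ^ (2 + s / 3)) := by gcongr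
      _ = _ := by field_simp
  have b2 : D / κ ≤ 1 := (div_le_one hκ).2 (by linarith)
  have b3 : 3 * (∫ x in A, (|f x| * η x ^ 2) ^ 6) / κ ^ 3 ≤ 3 * (S * c₂ ^ 3) := by
    rw [div_le_iff₀ (by positivity)]
    linarith
  have b4 : 81 * (6 * L) ^ 3 * r⁻¹ ^ 3 * (∑ i, ∫ x in A, |g i x| ^ 3) ≤
      c₄ * (r * r ^ (-(3 / s))) := by
    calc 81 * (6 * L) ^ 3 * r⁻¹ ^ 3 * (∑ i, ∫ x in A, |g i x| ^ 3)
        ≤ 81 * (6 * L) ^ 3 * r⁻¹ ^ 3 * (3 * Q * r ^ (3 + 3 * (1 / 3 - 1 / s))) := by gcongr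
      _ = _ := by rw [← p3, hc₄]; ring
  have lhs : ∫ x in ball3 (2 * r) \ ball3 r, |f x| ^ 3 ≤ ∫ x in A, (|f x| * η x ^ 2) ^ 3 := by
    have hsub : ball3 (2 * r) \ ball3 r ⊆ A :=
      Set.sdiff_subset_sdiff (ball_subset_ball (by linarith)) (ball_subset_ball (by linarith))
    calc ∫ x in ball3 (2 * r) \ ball3 r, |f x| ^ 3
        = ∫ x in ball3 (2 * r) \ ball3 r, (|f x| * η x ^ 2) ^ 3 :=
          setIntegral_congr_fun (measurableSet_ball.diff measurableSet_ball) fun x hx => by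
            simp [hone x hx]
      _ ≤ _ := setIntegral_mono_set (hint (by fun_prop))
          (Eventually.of_forall fun x => by
            have := h0 x
            simp only [Pi.zero_apply]
            positivity) hsub.eventuallyLE
  refine lhs.trans (X.trans ?_)
  have hDT : 0 ≤ D ^ (9 / (s + 6)) := by positivity
  calc _ ≤ 3 * (r * κ ^ (9 / (s + 6)) * (6 ^ s * (3 * M) + 1 + 3 * (S * c₂ ^ 3))
        + c₄ * (r * r ^ (-(3 / s)))) := by gcongr
    _ ≤ 3 * (r * (D ^ (9 / (s + 6)) + r ^ (-(3 / s))) * c₃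
        + c₄ * (r * (D ^ (9 / (s + 6)) + r ^ (-(3 / s))))) := by
        gcongr
        linarith
    _ = _ := by ring

theorem norm_pow_three_le (v : E3) : ‖v‖ ^ 3 ≤ 9 * ∑ j, |v j| ^ 3 := by
  have h1 : ‖v‖ ≤ ∑ j, |v j| := by
    rw [EuclideanSpace.norm_eq]
    refine Real.sqrt_le_iff.2 ⟨Finset.sum_nonneg fun _ _ => abs_nonneg _, ?_⟩
    simpa using Finset.sum_sq_le_sq_sum_of_nonneg (s := Finset.univ) (f := fun j => |v j|)
      fun j _ => abs_nonneg _
  have h2 := pow_sum_div_card_le_sum_pow (s := Finset.univ) (f := fun j => |v j|)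
    (fun j _ => abs_nonneg _) 2
  have h3 : ‖v‖ ^ 3 ≤ (∑ j, |v j|) ^ 3 := by gcongr
  norm_num at h2
  linarith

theorem abs_le_frob (B : Fin 3 → Fin 3 → ℝ) (i j : Fin 3) : |B i j| ≤ frob B := by
  refine Real.abs_le_sqrt ?_
  calc B i j ^ 2 ≤ ∑ j, B i j ^ 2 :=
        Finset.single_le_sum (f := fun j => B i j ^ 2) (fun _ _ => sq_nonneg _)
          (Finset.mem_univ j)
    _ ≤ _ := Finset.single_le_sum (f := fun i => ∑ j, B i j ^ 2)
          (fun _ _ => Finset.sum_nonneg fun _ _ => sq_nonneg _) (Finset.mem_univ i)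

theorem continuous_frob_sub {Φ : E3 → Fin 3 → Fin 3 → ℝ}
    (hΦ : ∀ i j, Continuous fun x => Φ x i j) (c : Fin 3 → Fin 3 → ℝ) :
    Continuous fun x => frob fun i j => Φ x i j - c i j := by
  unfold frob
  fun_prop

theorem meanOsc_nonneg (Φ : E3 → Fin 3 → Fin 3 → ℝ) (s r : ℝ) : 0 ≤ meanOsc Φ s r :=
  Real.rpow_nonneg (mul_nonneg (by positivity)
    (integral_nonneg fun _ => Real.rpow_nonneg (Real.sqrt_nonneg _) _)) _

theorem integral_frob_rpow_le {Φ : E3 → Fin 3 → Fin 3 → ℝ} {s R C₀ : ℝ} (hs : 0 < s)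
    (hR : 0 < R) (hC₀ : 0 ≤ C₀) (h : meanOsc Φ s R ≤ C₀ * R ^ ((1 : ℝ) / 3 - 1 / s)) :
    ∫ x in ball3 R, (frob fun i j => Φ x i j - mavg Φ R i j) ^ s ≤
      (volume (ball3 1)).toReal * C₀ ^ s * R ^ (2 + s / 3) := by
  have hI : 0 ≤ ∫ x in ball3 R, (frob fun i j => Φ x i j - mavg Φ R i j) ^ s :=
    integral_nonneg fun _ => Real.rpow_nonneg (Real.sqrt_nonneg _) _
  have hω := volume_ball3_one_pos
  have hp := Real.rpow_le_rpow (meanOsc_nonneg Φ s R) h hs.le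
  rw [meanOsc, ← Real.rpow_mul (by positivity), one_div_mul_cancel hs.ne', Real.rpow_one,
    Real.mul_rpow hC₀ (by positivity), ← Real.rpow_mul hR.le, volume_ball3_toReal hR,
    inv_mul_le_iff₀ (by positivity)] at hp
  refine hp.trans_eq ?_
  have e : R ^ 3 * R ^ ((1 / 3 - 1 / s) * s) = R ^ (2 + s / 3) := by
    rw [← Real.rpow_natCast, ← Real.rpow_add hR]
    congr 1
    field_simp
    push_cast
    ring
  rw [← e]
  ring

theorem pd_sub_const (f : E3 → ℝ) (c : ℝ) (i : Fin 3) (x : E3) :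
    pd i (fun y => f y - c) x = pd i f x := by
  simp [pd, fderiv_sub_const]

theorem exists_vector_cubic_const {v : E3 → E3} (hv : ContDiff ℝ (⊤ : ℕ∞) v)
    {Φ : E3 → Fin 3 → Fin 3 → ℝ} (hΦ : ∀ i j, ContDiff ℝ (⊤ : ℕ∞) (fun x => Φ x i j))
    (hΦv : ∀ (x : E3) (j : Fin 3), mdiv Φ x j = v x j) {s : ℝ} (hs1 : 3 < s) (hs2 : s ≤ 6)
    {C₀ : ℝ} (hC₀ : 0 < C₀)
    (hosc : ∀ r : ℝ, 1 < r → meanOsc Φ s r ≤ C₀ * r ^ ((1 : ℝ) / 3 - 1 / s)) :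
    ∃ C : ℝ, 0 < C ∧ ∀ r : ℝ, 1 < r →
      r⁻¹ * (∫ x in ball3 (2 * r) \ ball3 r, ‖v x‖ ^ 3) ≤
        C * (((∫ x in ball3 (4 * r) \ ball3 (r / 2), gradSq v x) ^ ((1 : ℝ) / 2))
          ^ (18 / (s + 6)) + r ^ (-(3 / s))) := by
  have hs0 : 0 < s := by linarith
  have hω := volume_ball3_one_pos
  obtain ⟨C, hC, hCr⟩ := exists_scalar_cubic_const hs1 hs2
    (M := (volume (ball3 1)).toReal * C₀ ^ s * 4 ^ (2 + s / 3)) (by positivity)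
  refine ⟨27 * C, by positivity, fun r hr1 => ?_⟩
  have hr : 0 < r := by linarith
  have hvj : ∀ j, ContDiff ℝ 1 fun x => v x j := fun j =>
    (contDiff_euclidean.1 (hv.of_le (by exact_mod_cast le_top))) j
  have hΦ1 : ∀ i j, ContDiff ℝ 1 fun x => Φ x i j :=
    fun i j => (hΦ i j).of_le (by exact_mod_cast le_top)
  have cv := fun j => (hvj j).continuous
  have cpv := fun j i => continuous_pd (hvj j) i
  set A := ball3 (4 * r) \ ball3 (r / 2) with hA
  have cgrad : Continuous (gradSq v) := by
    unfold gradSq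
    fun_prop
  have hfr : Continuous fun x => (frob fun i j => Φ x i j - mavg Φ (4 * r) i j) ^ s :=
    (continuous_frob_sub (fun i j => (hΦ1 i j).continuous) _).rpow_const
      fun x => Or.inr hs0.le
  have hball : IntegrableOn (fun x => (frob fun i j => Φ x i j - mavg Φ (4 * r) i j) ^ s)
      (ball3 (4 * r)) :=
    (hfr.continuousOn.integrableOn_compact (isCompact_closedBall (0 : E3) (4 * r))).mono_set
      ball_subset_closedBall
  set G := ∫ x in A, gradSq v x with hG
  have hG0 : 0 ≤ G := integral_nonneg fun x =>
    Finset.sum_nonneg fun _ _ => Finset.sum_nonneg fun _ _ => sq_nonneg _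
  have key : ∀ j, ∫ x in ball3 (2 * r) \ ball3 r, |v x j| ^ 3 ≤
      C * (r * (G ^ (9 / (s + 6)) + r ^ (-(3 / s)))) := by
    intro j
    refine (hCr r hr1 (fun x => v x j) (fun i x => Φ x i j - mavg Φ (4 * r) i j) (hvj j)
      (fun i => (hΦ1 i j).sub contDiff_const) (fun x => ?_) fun i => ?_).trans ?_
    · simp only [pd_sub_const, ← hΦv x j, mdiv]
    · have cg : Continuous fun x => |Φ x i j - mavg Φ (4 * r) i j| ^ s :=
        ((hΦ1 i j).continuous.sub continuous_const).abs.rpow_const fun x => Or.inr hs0.le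
      calc ∫ x in A, |Φ x i j - mavg Φ (4 * r) i j| ^ s
          ≤ ∫ x in A, (frob fun i j => Φ x i j - mavg Φ (4 * r) i j) ^ s :=
            setIntegral_mono (cg.integrableOn_annulus _ _) (hfr.integrableOn_annulus _ _)
              fun x => Real.rpow_le_rpow (abs_nonneg _)
                (abs_le_frob (fun i j => Φ x i j - mavg Φ (4 * r) i j) i j) hs0.le
        _ ≤ ∫ x in ball3 (4 * r), (frob fun i j => Φ x i j - mavg Φ (4 * r) i j) ^ s :=
            setIntegral_mono_set hball
              (Eventually.of_forall fun _ => Real.rpow_nonneg (Real.sqrt_nonneg _) _)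
              Set.sdiff_subset.eventuallyLE
        _ ≤ (volume (ball3 1)).toReal * C₀ ^ s * (4 * r) ^ (2 + s / 3) :=
            integral_frob_rpow_le hs0 (by positivity) hC₀.le (hosc _ (by linarith))
        _ = _ := by
            rw [Real.mul_rpow (by norm_num) hr.le]
            ring
    · have hle : ∫ x in A, ∑ i, pd i (fun x => v x j) x ^ 2 ≤ G :=
        setIntegral_mono (Continuous.integrableOn_annulus (by fun_prop) _ _)
          (cgrad.integrableOn_annulus _ _) fun x =>
            Finset.single_le_sum (f := fun j => ∑ i, pd i (fun x => v x j) x ^ 2)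
              (fun _ _ => Finset.sum_nonneg fun _ _ => sq_nonneg _) (Finset.mem_univ j)
      have h0 : 0 ≤ ∫ x in A, ∑ i, pd i (fun x => v x j) x ^ 2 :=
        integral_nonneg fun x => Finset.sum_nonneg fun _ _ => sq_nonneg _
      gcongr
  have hexp : (G ^ ((1 : ℝ) / 2)) ^ (18 / (s + 6)) = G ^ (9 / (s + 6)) := by
    rw [← Real.rpow_mul hG0]
    congr 1
    ring
  rw [hexp, inv_mul_le_iff₀ hr]
  calc ∫ x in ball3 (2 * r) \ ball3 r, ‖v x‖ ^ 3
      ≤ ∫ x in ball3 (2 * r) \ ball3 r, 9 * ∑ j, |v x j| ^ 3 :=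
        setIntegral_mono ((hv.continuous.norm.pow 3).integrableOn_annulus _ _)
          (Continuous.integrableOn_annulus (by fun_prop) _ _) fun x => norm_pow_three_le (v x)
    _ = 9 * ∑ j, ∫ x in ball3 (2 * r) \ ball3 r, |v x j| ^ 3 := by
        rw [integral_const_mul, integral_finsetSum _ fun j _ =>
          Continuous.integrableOn_annulus (by fun_prop) _ _]
    _ ≤ 9 * ∑ _j : Fin 3, C * (r * (G ^ (9 / (s + 6)) + r ^ (-(3 / s)))) := by
        gcongr with j
        exact key j
    _ = _ := by
        simp only [Finset.sum_const, Finset.card_univ, Fintype.card_fin, nsmul_eq_mul]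
        push_cast
        ring

/-- Annulus estimate for the cubic integrals under the potential growth hypothesis. -/
theorem annulus_cubic_estimate
    (u w b : E3 → E3) (P : E3 → ℝ) (hsol : IsMMPSolution u w b P)
    (Φ Ψ Υ : E3 → Fin 3 → Fin 3 → ℝ)
    (hΦ : ∀ i j, ContDiff ℝ (⊤ : ℕ∞) (fun x => Φ x i j))
    (hΨ : ∀ i j, ContDiff ℝ (⊤ : ℕ∞) (fun x => Ψ x i j))
    (hΥ : ∀ i j, ContDiff ℝ (⊤ : ℕ∞) (fun x => Υ x i j))
    (hΦu : ∀ (x : E3) (j : Fin 3), mdiv Φ x j = u x j)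
    (hΨb : ∀ (x : E3) (j : Fin 3), mdiv Ψ x j = b x j)
    (hΥw : ∀ (x : E3) (j : Fin 3), mdiv Υ x j = w x j)
    (s : ℝ) (hs1 : 3 < s) (hs2 : s ≤ 6)
    (C₀ : ℝ) (hC₀ : 0 < C₀)
    (hosc : ∀ r : ℝ, 1 < r →
      meanOsc Φ s r + meanOsc Ψ s r + meanOsc Υ s r ≤ C₀ * r ^ ((1:ℝ)/3 - 1/s))
    : ∃ C : ℝ, 0 < C ∧ ∀ r : ℝ, 1 < r →
      r⁻¹ * (∫ x in ball3 (2 * r) \ ball3 r, (‖u x‖ ^ 3 + ‖b x‖ ^ 3 + ‖w x‖ ^ 3)) ≤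
        C * (((∫ x in ball3 (4 * r) \ ball3 (r / 2), gradSq u x) ^ ((1:ℝ)/2))
                ^ (18 / (s + 6))
            + ((∫ x in ball3 (4 * r) \ ball3 (r / 2), gradSq b x) ^ ((1:ℝ)/2))
                ^ (18 / (s + 6))
            + ((∫ x in ball3 (4 * r) \ ball3 (r / 2), gradSq w x) ^ ((1:ℝ)/2))
                ^ (18 / (s + 6))
            + r ^ (-(3 / s))) := by
  obtain ⟨C₁, h₁, H₁⟩ := exists_vector_cubic_const hsol.smooth_u hΦ hΦu hs1 hs2 hC₀ fun r hr => by
    linarith [hosc r hr, meanOsc_nonneg Ψ s r, meanOsc_nonneg Υ s r]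
  obtain ⟨C₂, h₂, H₂⟩ := exists_vector_cubic_const hsol.smooth_b hΨ hΨb hs1 hs2 hC₀ fun r hr => by
    linarith [hosc r hr, meanOsc_nonneg Φ s r, meanOsc_nonneg Υ s r]
  obtain ⟨C₃, h₃, H₃⟩ := exists_vector_cubic_const hsol.smooth_w hΥ hΥw hs1 hs2 hC₀ fun r hr => by
    linarith [hosc r hr, meanOsc_nonneg Φ s r, meanOsc_nonneg Ψ s r]
  refine ⟨C₁ + C₂ + C₃, by positivity, fun r hr => ?_⟩
  have cu := hsol.smooth_u.continuous
  have cb := hsol.smooth_b.continuous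
  have cw := hsol.smooth_w.continuous
  have hint : ∀ {F : E3 → ℝ}, Continuous F → IntegrableOn F (ball3 (2 * r) \ ball3 r) :=
    fun hF => hF.integrableOn_annulus _ _
  rw [integral_add (hint (by fun_prop)) (hint (by fun_prop)),
    integral_add (hint (by fun_prop)) (hint (by fun_prop)), mul_add, mul_add]
  refine (add_le_add (add_le_add (H₁ r hr) (H₂ r hr)) (H₃ r hr)).trans ?_
  have hnn : ∀ v : E3 → E3, 0 ≤
      ((∫ x in ball3 (4 * r) \ ball3 (r / 2), gradSq v x) ^ ((1 : ℝ) / 2)) ^ (18 / (s + 6)) :=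
    fun v => Real.rpow_nonneg (Real.rpow_nonneg (integral_nonneg fun x =>
      Finset.sum_nonneg fun _ _ => Finset.sum_nonneg fun _ _ => sq_nonneg _) _) _
  have nu := hnn u
  have nb := hnn b
  have nw := hnn w
  simp only [add_mul]
  gcongr <;> linarith
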